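/- arXiv:1510.00756 — 2 statements merged into one kernel-verified Lean document; each statement's English description precedes it below -/
import Mathlib

section
/- Let G be a hypergraph and let d be the maximum degree of a vertex of G, i.e., the maximum over vertices v of the number of hyperedges containing v. Then hw(G) ≥ d. -/
/-- Connectivity relation between hyperedges within the edge set `E` of a hypergraph whose
hyperedges have vertex sets given by `dep`. -/
def EdgeConn {α ι : Type*} (dep : ι → Finset α) (E : Finset ι) : ι → ι → Prop :=
  Relation.ReflTransGen fun a b => a ∈ E ∧ b ∈ E ∧ ∃ v, v ∈ dep a ∧ v ∈ dep b

open Classical in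
/-- Hierarchy width of the hypergraph with hyperedges `E`, where hyperedge `e` consists of
the vertices `dep e`: `0` if there are no hyperedges; `1 +` the minimum over single-edge
removals for a connected hypergraph; the maximum over connected components otherwise. -/
noncomputable def hw {α ι : Type*} [DecidableEq ι] (dep : ι → Finset α) (E : Finset ι) : ℕ :=
  E.sup fun e =>
    1 + ((E.filter fun f => EdgeConn dep E e f).attach.inf fun f =>
      ((hw dep ((E.filter fun f => EdgeConn dep E e f).erase f.1) : ℕ∞))).toNat
termination_by E.card
decreasing_by
  exact lt_of_lt_of_le (Finset.card_erase_lt_of_mem f.2)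
    (Finset.card_le_card (Finset.filter_subset _ _))

/-!
Fix a vertex `x` of positive degree. All hyperedges containing `x` meet in `x`, so they lie in a
single connected component. Removing a hyperedge from that component lowers the degree of `x` by at
most one, while the recursion adds one to the width; strong induction on the set of hyperedges
concludes.
-/

section EdgeComponent

variable {α ι : Type*} {dep : ι → Finset α} {E : Finset ι} {e f : ι}

open Classical in
/-- The connected component of the hyperedge `e` in the hypergraph with hyperedges `E`, encoded as
its set of hyperedges; it is the hypergraph from which the recursion for `hw` removes a hyperedge.
It is empty if `e ∉ E`. -/
noncomputable def edgeComponent (dep : ι → Finset α) (E : Finset ι) (e : ι) : Finset ι :=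
  E.filter fun f => EdgeConn dep E e f

theorem mem_edgeComponent : f ∈ edgeComponent dep E e ↔ f ∈ E ∧ EdgeConn dep E e f := by
  simp only [edgeComponent, Finset.mem_filter]

theorem edgeComponent_subset : edgeComponent dep E e ⊆ E :=
  fun _ hf => (mem_edgeComponent.1 hf).1

theorem self_mem_edgeComponent (he : e ∈ E) : e ∈ edgeComponent dep E e :=
  mem_edgeComponent.2 ⟨he, Relation.ReflTransGen.refl⟩

theorem mem_edgeComponent_of_mem_of_mem {x : α} (he : e ∈ E) (hf : f ∈ E)
    (hxe : x ∈ dep e) (hxf : x ∈ dep f) : f ∈ edgeComponent dep E e :=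
  mem_edgeComponent.2 ⟨hf, Relation.ReflTransGen.single ⟨he, hf, x, hxe, hxf⟩⟩

theorem filter_mem_edgeComponent [DecidableEq α] {x : α} (he : e ∈ E) (hxe : x ∈ dep e) :
    (edgeComponent dep E e).filter (fun f => x ∈ dep f) = E.filter fun f => x ∈ dep f := by
  refine (Finset.filter_subset_filter _ edgeComponent_subset).antisymm fun f hf => ?_
  obtain ⟨hfE, hxf⟩ := Finset.mem_filter.1 hf
  exact Finset.mem_filter.2 ⟨mem_edgeComponent_of_mem_of_mem he hfE hxe hxf, hxf⟩

theorem hw_eq_sup_edgeComponent [DecidableEq ι] (dep : ι → Finset α) (E : Finset ι) :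
    hw dep E = E.sup fun e => 1 + ((edgeComponent dep E e).inf fun f =>
      (hw dep ((edgeComponent dep E e).erase f) : ℕ∞)).toNat := by
  rw [hw]
  refine Finset.sup_congr rfl fun e _ => ?_
  rw [← Finset.inf_attach (edgeComponent dep E e)]
  rfl

theorem exists_mem_edgeComponent_hw_erase_lt_hw [DecidableEq ι] (dep : ι → Finset α) (he : e ∈ E) :
    ∃ f ∈ edgeComponent dep E e, hw dep ((edgeComponent dep E e).erase f) < hw dep E := by
  -- The component is nonempty, so the infimum in `ℕ∞` is attained and `toNat` loses nothing.
  obtain ⟨f, hf, hinf⟩ := (edgeComponent dep E e).exists_mem_eq_inf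
    ⟨e, self_mem_edgeComponent he⟩ fun f => (hw dep ((edgeComponent dep E e).erase f) : ℕ∞)
  refine ⟨f, hf, Nat.one_add_le_iff.1 ?_⟩
  calc 1 + hw dep ((edgeComponent dep E e).erase f)
      = 1 + ((edgeComponent dep E e).inf fun f =>
          (hw dep ((edgeComponent dep E e).erase f) : ℕ∞)).toNat := by
        rw [hinf, ENat.toNat_natCast]
    _ ≤ hw dep E := by
        rw [hw_eq_sup_edgeComponent dep E]
        exact Finset.le_sup (f := fun e => 1 + ((edgeComponent dep E e).inf fun f =>
          (hw dep ((edgeComponent dep E e).erase f) : ℕ∞)).toNat) he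

end EdgeComponent

theorem stmt7_general {α ι : Type*} [DecidableEq α] [DecidableEq ι]
    (dep : ι → Finset α) (E : Finset ι) (x : α) :
    (E.filter fun e => x ∈ dep e).card ≤ hw dep E := by
  induction E using Finset.strongInduction with
  | H E ih =>
    rcases (E.filter fun e => x ∈ dep e).eq_empty_or_nonempty with hempty | ⟨e, he⟩
    · simp [hempty]
    obtain ⟨heE, hxe⟩ := Finset.mem_filter.1 he
    obtain ⟨f, hf, hlt⟩ := exists_mem_edgeComponent_hw_erase_lt_hw dep heE
    have hssub : (edgeComponent dep E e).erase f ⊂ E :=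
      (Finset.erase_ssubset hf).trans_subset edgeComponent_subset
    calc (E.filter fun g => x ∈ dep g).card
        = ((edgeComponent dep E e).filter fun g => x ∈ dep g).card := by
          rw [filter_mem_edgeComponent heE hxe]
      _ ≤ (((edgeComponent dep E e).filter fun g => x ∈ dep g).erase f).card + 1 :=
          Nat.sub_le_iff_le_add.1 Finset.pred_card_le_card_erase
      _ = (((edgeComponent dep E e).erase f).filter fun g => x ∈ dep g).card + 1 := by
          rw [Finset.filter_erase]
      _ ≤ hw dep ((edgeComponent dep E e).erase f) + 1 := Nat.succ_le_succ (ih _ hssub)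
      _ ≤ hw dep E := hlt

/-- The hierarchy width of a hypergraph is at least its maximum vertex degree
(the maximum over vertices `x` of the number of hyperedges containing `x`). -/
theorem stmt7 {α ι : Type*} [Fintype α] [DecidableEq α] [DecidableEq ι]
    (dep : ι → Finset α) (E : Finset ι) :
    (Finset.univ.sup fun x : α => (E.filter fun e => x ∈ dep e).card) ≤ hw dep E :=
  Finset.sup_le fun x _ => stmt7_general dep E x
end

section
/- Consider the voting model with linear semantics in which all prior weights are zero (w_{T_i} = w_{F_i} = 0 for all i) and the vote weight w > 0 is a fixed sufficiently large constant (independent of n). Then there is a constant c > 0 (depending only on w) such that for all sufficiently large n, the mixing time of Gibbs sampling on this model satisfies t_mix ≥ 2^{c·n}. -/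
/-- The Gibbs distribution `π(x) = exp(energy x) / Z` on worlds `V → S`. -/
noncomputable def gibbsPi {V S : Type*} [Fintype V] [DecidableEq V] [Fintype S] [DecidableEq S]
    (energy : (V → S) → ℝ) (x : V → S) : ℝ :=
  Real.exp (energy x) / ∑ y : V → S, Real.exp (energy y)

/-- The transition matrix of Gibbs sampling: pick a variable `v` uniformly at random and
resample it from its conditional distribution given the other variables. -/
noncomputable def gibbsP {V S : Type*} [Fintype V] [DecidableEq V] [Fintype S] [DecidableEq S]
    (energy : (V → S) → ℝ) : Matrix (V → S) (V → S) ℝ :=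
  fun x y =>
    (Fintype.card V : ℝ)⁻¹ * ∑ v : V,
      if ∀ u, u ≠ v → x u = y u then
        Real.exp (energy y) / ∑ s : S, Real.exp (energy (Function.update x v s))
      else 0

/-- The chain with transition matrix `P` is, at time `t`, within total variation distance
`1/4` of `pi`, from every starting state. -/
def MixedAt {Ω : Type*} [Fintype Ω] [DecidableEq Ω] (P : Matrix Ω Ω ℝ) (pi : Ω → ℝ)
    (t : ℕ) : Prop :=
  ∀ x : Ω, ∀ A : Finset Ω, |∑ y ∈ A, ((P ^ t) x y - pi y)| ≤ 1 / 4

/-- The variables of the voting model: `none` is the query `Q` (with boolean value `true`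
interpreted as `Q = 1` and `false` as `Q = -1`), `some (true, i)` is the voter `T i`, and
`some (false, i)` is the voter `F i` (with `true ↦ 1`, `false ↦ 0`). -/
abbrev VotingVar (n : ℕ) := Option (Bool × Fin n)

/-- The value `±1` of the query variable in world `x`. -/
noncomputable def qVal {n : ℕ} (x : VotingVar n → Bool) : ℝ := if x none = true then 1 else -1

/-- The number of voters `T i` (if `b = true`) resp. `F i` (if `b = false`) that are set in
world `x`. -/
def numVoters {n : ℕ} (b : Bool) (x : VotingVar n → Bool) : ℕ :=
  (Finset.univ.filter fun i : Fin n => x (some (b, i)) = true).card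

/-- The prior terms `Σ_i w_{T_i} T_i + Σ_i w_{F_i} F_i` of the voting model energy. -/
noncomputable def votingPriors {n : ℕ} (wT wF : Fin n → ℝ) (x : VotingVar n → Bool) : ℝ :=
  (∑ i, wT i * (if x (some (true, i)) = true then 1 else 0)) +
    ∑ i, wF i * (if x (some (false, i)) = true then 1 else 0)

/-- Energy of the voting model with logical semantics:
`w·Q·max_i T_i − w·Q·max_i F_i + Σ_i w_{T_i}·T_i + Σ_i w_{F_i}·F_i`. -/
noncomputable def votingEnergyLogical (n : ℕ) (w : ℝ) (wT wF : Fin n → ℝ)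
    (x : VotingVar n → Bool) : ℝ :=
  w * qVal x * (if 0 < numVoters true x then 1 else 0)
    - w * qVal x * (if 0 < numVoters false x then 1 else 0)
    + votingPriors wT wF x

/-- Energy of the voting model with ratio semantics:
`w·Q·log(1+Σ_i T_i) − w·Q·log(1+Σ_i F_i) + Σ_i w_{T_i}·T_i + Σ_i w_{F_i}·F_i`. -/
noncomputable def votingEnergyRatio (n : ℕ) (w : ℝ) (wT wF : Fin n → ℝ)
    (x : VotingVar n → Bool) : ℝ :=
  w * qVal x * Real.log (1 + (numVoters true x : ℝ))
    - w * qVal x * Real.log (1 + (numVoters false x : ℝ))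
    + votingPriors wT wF x

/-- Energy of the voting model with linear semantics:
`w·Q·Σ_i T_i − w·Q·Σ_i F_i + Σ_i w_{T_i}·T_i + Σ_i w_{F_i}·F_i`. -/
noncomputable def votingEnergyLinear (n : ℕ) (w : ℝ) (wT wF : Fin n → ℝ)
    (x : VotingVar n → Bool) : ℝ :=
  w * qVal x * (numVoters true x : ℝ) - w * qVal x * (numVoters false x : ℝ)
    + votingPriors wT wF x

/-!
The set `{Q = 1}` is a bottleneck. The weights `e^E` factor over the voters once `Q` is fixed, so
both `{Q = 1}` and `{Q = -1}` have total weight `(1 + e^w)^n (1 + e^{-w})^n = (2 cosh (w / 2))^{2n}`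
and stationary probability `1/2`. Leaving `{Q = 1}` means resampling `Q`, which negates the energy;
hence each of the `4^n` worlds with `Q = 1` contributes at most
`e^E e^{-E} / (e^E + e^{-E}) ≤ 1/2` to the unnormalized flow, and the stationary probability of
crossing in one step is at most `cosh (w / 2)^{-2n} / (4 (2n + 1))`. In `t` steps the chain started
from `π` restricted to `{Q = 1}` crosses with at most `t` times this probability, while mixing
forces it to carry mass at least `1/2 · (1/2 - 1/4) = 1/8` across.
-/

open Finset Function Matrix

lemma exp_mul_exp_div_add_le (a b : ℝ) :
    Real.exp a * (Real.exp b / (Real.exp a + Real.exp b)) ≤ Real.exp ((a + b) / 2) / 2 := by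
  have ha : Real.exp a = Real.exp (a / 2) ^ 2 := by rw [← Real.exp_nat_mul]; ring_nf
  have hb : Real.exp b = Real.exp (b / 2) ^ 2 := by rw [← Real.exp_nat_mul]; ring_nf
  rw [add_div, Real.exp_add, ha, hb, ← mul_div_assoc, div_le_div_iff₀ (by positivity) two_pos]
  have hamgm := two_mul_le_add_sq (Real.exp (a / 2)) (Real.exp (b / 2))
  have := mul_le_mul_of_nonneg_left hamgm
    (by positivity : 0 ≤ Real.exp (a / 2) * Real.exp (b / 2))
  linarith

lemma one_add_exp_mul_one_add_exp_neg (w : ℝ) :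
    (1 + Real.exp w) * (1 + Real.exp (-w)) = 4 * Real.cosh (w / 2) ^ 2 := by
  have hexp : Real.exp w * Real.exp (-w) = 1 := by
    rw [← Real.exp_add, add_neg_cancel, Real.exp_zero]
  have hcosh : Real.cosh w = 2 * Real.cosh (w / 2) ^ 2 - 1 := by
    have := Real.cosh_two_mul (w / 2)
    rw [mul_div_cancel₀ w two_ne_zero] at this
    linarith [Real.cosh_sq (w / 2)]
  linarith [Real.cosh_eq w]

/-- The edge measure `Q(A, B)` of the chain `P` with initial law `π`: the mass that moves from `A`
to `B` in one step. -/
def edgeMeasure {Ω : Type*} (P : Matrix Ω Ω ℝ) (π : Ω → ℝ) (A B : Finset Ω) : ℝ :=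
  ∑ x ∈ A, π x * ∑ y ∈ B, P x y

section Bottleneck

variable {Ω : Type*} [Fintype Ω] [DecidableEq Ω] {M N P : Matrix Ω Ω ℝ} {π : Ω → ℝ}

lemma sum_row_le_one_of_mem_rowStochastic (hP : P ∈ rowStochastic ℝ Ω) (A : Finset Ω) (x : Ω) :
    ∑ y ∈ A, P x y ≤ 1 :=
  (sum_le_univ_sum_of_nonneg fun _ => nonneg_of_mem_rowStochastic hP).trans_eq
    (sum_row_of_mem_rowStochastic hP x)

lemma vecMul_eq_self_of_detailedBalance (hP : P ∈ rowStochastic ℝ Ω)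
    (hrev : ∀ x y, π x * P x y = π y * P y x) : π ᵥ* P = π := by
  ext y
  simp_rw [vecMul, dotProduct, hrev _ y, ← mul_sum, sum_row_of_mem_rowStochastic hP, mul_one]

lemma edgeMeasure_mul_compl_le (hM : ∀ x y, 0 ≤ M x y) (hN : N ∈ rowStochastic ℝ Ω)
    (hπ : ∀ x, 0 ≤ π x) (hstat : π ᵥ* M = π) (A : Finset Ω) :
    edgeMeasure (M * N) π A Aᶜ ≤ edgeMeasure M π A Aᶜ + edgeMeasure N π A Aᶜ := by
  have hNA (z : Ω) : 0 ≤ ∑ y ∈ Aᶜ, N z y :=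
    sum_nonneg fun _ _ => nonneg_of_mem_rowStochastic hN
  have hflow_nonneg (x z : Ω) : 0 ≤ π x * M x z :=
    mul_nonneg (hπ x) (hM x z)
  have hflow_le (z : Ω) : ∑ x ∈ A, π x * M x z ≤ π z :=
    (sum_le_univ_sum_of_nonneg fun x => hflow_nonneg x z).trans_eq (congrFun hstat z)
  -- Condition on the position `z` after the `M`-step.
  have hsplit : edgeMeasure (M * N) π A Aᶜ
      = ∑ z, (∑ x ∈ A, π x * M x z) * ∑ y ∈ Aᶜ, N z y := by
    simp_rw [edgeMeasure, Matrix.mul_apply, sum_comm (s := Aᶜ), ← mul_sum, sum_mul, mul_sum,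
      ← mul_assoc]
    rw [sum_comm]
  have hcrossed : ∑ z ∈ Aᶜ, ∑ x ∈ A, π x * M x z = edgeMeasure M π A Aᶜ := by
    simp_rw [edgeMeasure, mul_sum]
    exact sum_comm
  rw [hsplit, ← sum_add_sum_compl A, add_comm, ← hcrossed]
  refine add_le_add (sum_le_sum fun z _ => ?_) (sum_le_sum fun z _ => ?_)
  · exact mul_le_of_le_one_right (sum_nonneg fun x _ => hflow_nonneg x z)
      (sum_row_le_one_of_mem_rowStochastic hN _ z)
  · exact mul_le_mul_of_nonneg_right (hflow_le z) (hNA z)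

lemma edgeMeasure_pow_compl_le (hP : P ∈ rowStochastic ℝ Ω) (hπ : ∀ x, 0 ≤ π x)
    (hstat : π ᵥ* P = π) (A : Finset Ω) (t : ℕ) :
    edgeMeasure (P ^ t) π A Aᶜ ≤ t * edgeMeasure P π A Aᶜ := by
  induction t with
  | zero =>
    have hstay (x : Ω) (hx : x ∈ A) : ∑ y ∈ Aᶜ, (1 : Matrix Ω Ω ℝ) x y = 0 :=
      sum_eq_zero fun y hy => one_apply_ne (ne_of_mem_of_not_mem hx (mem_compl.mp hy))
    simp +contextual [edgeMeasure, hstay]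
  | succ t ih =>
    calc edgeMeasure (P ^ (t + 1)) π A Aᶜ
        ≤ edgeMeasure P π A Aᶜ + edgeMeasure (P ^ t) π A Aᶜ := by
          rw [pow_succ']
          exact edgeMeasure_mul_compl_le hP.1 (pow_mem hP t) hπ hstat A
      _ ≤ (t + 1 : ℕ) * edgeMeasure P π A Aᶜ := by
          push_cast
          linarith

lemma MixedAt.mul_le_edgeMeasure {t : ℕ} (hmix : MixedAt P π t) (hP : P ∈ rowStochastic ℝ Ω)
    (hπ : ∀ x, 0 ≤ π x) (hstat : π ᵥ* P = π) (A : Finset Ω) :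
    (∑ x ∈ A, π x) * (∑ y ∈ Aᶜ, π y - 1 / 4) ≤ t * edgeMeasure P π A Aᶜ := by
  have hreach (x : Ω) : ∑ y ∈ Aᶜ, π y - 1 / 4 ≤ ∑ y ∈ Aᶜ, (P ^ t) x y := by
    have := (abs_le.mp (hmix x Aᶜ)).1
    rw [sum_sub_distrib] at this
    linarith
  calc (∑ x ∈ A, π x) * (∑ y ∈ Aᶜ, π y - 1 / 4)
      = ∑ x ∈ A, π x * (∑ y ∈ Aᶜ, π y - 1 / 4) := sum_mul ..
    _ ≤ edgeMeasure (P ^ t) π A Aᶜ :=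
        sum_le_sum fun x _ => mul_le_mul_of_nonneg_left (hreach x) (hπ x)
    _ ≤ t * edgeMeasure P π A Aᶜ := edgeMeasure_pow_compl_le hP hπ hstat A t

end Bottleneck

section Gibbs

variable {V S : Type*} [Fintype V] [DecidableEq V] [Fintype S] [DecidableEq S]
  (E : (V → S) → ℝ)

lemma gibbsPi_nonneg (x : V → S) : 0 ≤ gibbsPi E x := by
  unfold gibbsPi
  positivity

lemma gibbsP_nonneg (x y : V → S) : 0 ≤ gibbsP E x y := by
  unfold gibbsP
  refine mul_nonneg (by positivity) (sum_nonneg fun v _ => ?_)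
  split_ifs <;> positivity

lemma sum_filter_agree_off {M : Type*} [AddCommMonoid M] (x : V → S) (v : V) (B : Finset (V → S))
    (F : (V → S) → M) :
    ∑ y ∈ B with ∀ u, u ≠ v → x u = y u, F y = ∑ s with update x v s ∈ B, F (update x v s) := by
  have himage : ({y ∈ B | ∀ u, u ≠ v → x u = y u} : Finset (V → S))
      = ({s | update x v s ∈ B} : Finset S).image (update x v) := by
    ext y
    simp only [mem_filter, mem_image, mem_univ, true_and]
    constructor
    · rintro ⟨hyB, hy⟩
      have hxy : update x v (y v) = y := update_eq_iff.mpr ⟨rfl, hy⟩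
      exact ⟨y v, hxy.symm ▸ hyB, hxy⟩
    · rintro ⟨s, hs, rfl⟩
      exact ⟨hs, fun u hu => (update_of_ne hu s x).symm⟩
  rw [himage, sum_image (update_injective x v).injOn]

lemma sum_gibbsP (x : V → S) (B : Finset (V → S)) :
    ∑ y ∈ B, gibbsP E x y = (Fintype.card V : ℝ)⁻¹ * ∑ v,
      (∑ s with update x v s ∈ B, Real.exp (E (update x v s)))
        / ∑ s, Real.exp (E (update x v s)) := by
  simp only [gibbsP, ← mul_sum]
  rw [sum_comm]
  simp only [← sum_filter, ← sum_div, sum_filter_agree_off]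

lemma gibbsP_mem_rowStochastic [Nonempty V] : gibbsP E ∈ rowStochastic ℝ (V → S) := by
  refine mem_rowStochastic_iff_sum.mpr ⟨gibbsP_nonneg E, fun x => ?_⟩
  have hS : Nonempty S := ‹Nonempty V›.map x
  have hpos (v : V) : ∑ s, Real.exp (E (update x v s)) ≠ 0 := by positivity
  simp [sum_gibbsP, div_self (hpos _)]

lemma gibbsPi_mul_gibbsP_comm (x y : V → S) :
    gibbsPi E x * gibbsP E x y = gibbsPi E y * gibbsP E y x := by
  simp only [gibbsPi, gibbsP, mul_sum]
  refine sum_congr rfl fun v _ => ?_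
  by_cases hxy : ∀ u, u ≠ v → x u = y u
  · have hupdate (s : S) : update x v s = update y v s :=
      update_eq_iff.mpr ⟨by simp, fun u hu => by rw [update_of_ne hu, hxy u hu]⟩
    have hyx (u : V) (hu : u ≠ v) : y u = x u := (hxy u hu).symm
    simp only [if_pos hxy, if_pos hyx, hupdate]
    ring
  · have hyx : ¬ ∀ u, u ≠ v → y u = x u := fun h => hxy fun u hu => (h u hu).symm
    simp only [if_neg hxy, if_neg hyx, mul_zero]

lemma gibbsPi_vecMul_gibbsP [Nonempty V] : gibbsPi E ᵥ* gibbsP E = gibbsPi E :=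
  vecMul_eq_self_of_detailedBalance (gibbsP_mem_rowStochastic E) (gibbsPi_mul_gibbsP_comm E)

/-- The worlds in which the variable `v` has the value `s`. -/
def cylinder (v : V) (s : S) : Finset (V → S) := {x | x v = s}

@[simp]
lemma mem_cylinder {v : V} {s : S} {x : V → S} : x ∈ cylinder v s ↔ x v = s := by
  simp [cylinder]

lemma sum_cylinder_none {α M : Type*} [Fintype α] [DecidableEq α] [AddCommMonoid M] (s : S)
    (F : (Option α → S) → M) :
    ∑ x ∈ cylinder none s, F x = ∑ f : α → S, F (fun v => v.elim s f) := by
  have hglue (x : Option α → S) (hx : x none = s) :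
      (fun v => v.elim s fun a => x (some a)) = x := by
    ext (_ | a) <;> simp [hx]
  refine sum_nbij' (fun x a => x (some a)) (fun f v => v.elim s f) ?_ ?_ ?_ ?_ ?_ <;>
    simp +contextual [hglue]

end Gibbs

section BoolGibbs

variable {V : Type*} [Fintype V] [DecidableEq V] (E : (V → Bool) → ℝ)

lemma compl_cylinder_bool (v : V) (b : Bool) : (cylinder v b)ᶜ = cylinder v !b := by
  ext x
  simp only [mem_compl, mem_cylinder, Bool.eq_not]

lemma sum_gibbsP_cylinder_not {v : V} {b : Bool} {x : V → Bool} (hx : x v = b) :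
    ∑ y ∈ cylinder v !b, gibbsP E x y = (Fintype.card V : ℝ)⁻¹ *
      (Real.exp (E (update x v !b)) / (Real.exp (E x) + Real.exp (E (update x v !b)))) := by
  have hleave : ({s | update x v s ∈ cylinder v !b} : Finset Bool) = {!b} := by
    ext s
    simp
  have hstay (u : V) (hu : u ≠ v) :
      ({s | update x u s ∈ cylinder v !b} : Finset Bool) = ∅ := by
    simp [update_of_ne hu.symm, hx]
  have hZ : ∑ s, Real.exp (E (update x v s)) = Real.exp (E x) + Real.exp (E (update x v !b)) := by
    have hself : update x v b = x := by rw [← hx, update_eq_self]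
    cases b <;> simp [hself, add_comm]
  rw [sum_gibbsP, sum_eq_single v (fun u _ hu => by rw [hstay u hu, sum_empty, zero_div]) (by simp),
    hleave, sum_singleton, hZ]

lemma edgeMeasure_gibbs_cylinder_le (v : V) (b : Bool) :
    edgeMeasure (gibbsP E) (gibbsPi E) (cylinder v b) (cylinder v !b) ≤
      (∑ x ∈ cylinder v b, Real.exp ((E x + E (update x v !b)) / 2))
        / (2 * Fintype.card V * ∑ x, Real.exp (E x)) := by
  rw [edgeMeasure, sum_div]
  refine sum_le_sum fun x hx => ?_
  rw [sum_gibbsP_cylinder_not E (mem_cylinder.mp hx), gibbsPi]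
  calc Real.exp (E x) / (∑ y, Real.exp (E y)) * ((Fintype.card V : ℝ)⁻¹ *
        (Real.exp (E (update x v !b)) / (Real.exp (E x) + Real.exp (E (update x v !b)))))
      = Real.exp (E x) *
          (Real.exp (E (update x v !b)) / (Real.exp (E x) + Real.exp (E (update x v !b))))
          / (Fintype.card V * ∑ y, Real.exp (E y)) := by
        ring
    _ ≤ Real.exp ((E x + E (update x v !b)) / 2) / 2 / (Fintype.card V * ∑ y, Real.exp (E y)) := by
        gcongr
        exact exp_mul_exp_div_add_le _ _
    _ = _ := by ring

lemma sum_gibbsPi_cylinder_eq_half {v : V}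
    (hsymm : ∑ x ∈ cylinder v true, Real.exp (E x) = ∑ x ∈ cylinder v false, Real.exp (E x))
    (b : Bool) : ∑ x ∈ cylinder v b, gibbsPi E x = 1 / 2 := by
  have hsplit := sum_add_sum_compl (cylinder v true) fun x => Real.exp (E x)
  have hZ : 0 < ∑ x, Real.exp (E x) := by positivity
  simp only [compl_cylinder_bool, Bool.not_true] at hsplit
  simp only [gibbsPi, ← sum_div]
  rw [div_eq_iff hZ.ne']
  cases b <;> linarith

end BoolGibbs

section Voting

variable {n : ℕ} (w : ℝ)

/-- The energy contributed by a single voter with value `s` when the query has value `q`; the voter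
is one of the `T i` if `b = true` and one of the `F i` if `b = false`. -/
def voteEnergy (q b s : Bool) : ℝ := if s then if b = q then w else -w else 0

lemma voteEnergy_not (q b s : Bool) : voteEnergy w (!q) b s = -voteEnergy w q b s := by
  cases q <;> cases b <;> cases s <;> simp [voteEnergy]

/-- The energy `w·Q·(Σ T − Σ F)` of the linear voting model without priors. -/
noncomputable abbrev votingEnergy (n : ℕ) (w : ℝ) : (VotingVar n → Bool) → ℝ :=
  votingEnergyLinear n w (fun _ => 0) (fun _ => 0)

lemma votingEnergy_eq_sum_voteEnergy (x : VotingVar n → Bool) :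
    votingEnergy n w x = ∑ p : Bool × Fin n, voteEnergy w (x none) p.1 (x (some p)) := by
  have hside (b : Bool) : ∑ i, voteEnergy w (x none) b (x (some (b, i)))
      = (if b = x none then w else -w) * numVoters b x := by
    rw [numVoters, mul_comm, ← nsmul_eq_mul, ← sum_const, sum_filter]
    rfl
  rw [Fintype.sum_prod_type, Fintype.sum_bool, hside, hside]
  cases hq : x none <;>
    simp [votingEnergyLinear, votingPriors, qVal, hq, sub_eq_add_neg]

lemma votingEnergy_update_query (x : VotingVar n → Bool) :
    votingEnergy n w (update x none !x none) = -votingEnergy n w x := by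
  simp [votingEnergy_eq_sum_voteEnergy, voteEnergy_not]

lemma sum_exp_votingEnergy_cylinder (n : ℕ) (q : Bool) :
    ∑ x ∈ cylinder none q, Real.exp (votingEnergy n w x) = (4 * Real.cosh (w / 2) ^ 2) ^ n :=
  calc ∑ x ∈ cylinder none q, Real.exp (votingEnergy n w x)
      = ∑ f : Bool × Fin n → Bool, ∏ p, Real.exp (voteEnergy w q p.1 (f p)) := by
        simp only [sum_cylinder_none, votingEnergy_eq_sum_voteEnergy, Real.exp_sum, Option.elim]
    _ = ∏ p : Bool × Fin n, ∑ s, Real.exp (voteEnergy w q p.1 s) := by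
        rw [Fintype.prod_sum fun (p : Bool × Fin n) s => Real.exp (voteEnergy w q p.1 s)]
    _ = ((1 + Real.exp w) * (1 + Real.exp (-w))) ^ n := by
        cases q <;> simp [Fintype.prod_prod_type, voteEnergy, mul_pow, add_comm, mul_comm]
    _ = (4 * Real.cosh (w / 2) ^ 2) ^ n := by rw [one_add_exp_mul_one_add_exp_neg]

lemma sum_exp_votingEnergy (n : ℕ) :
    ∑ x, Real.exp (votingEnergy n w x) = 2 * (4 * Real.cosh (w / 2) ^ 2) ^ n := by
  rw [← sum_add_sum_compl (cylinder none true), compl_cylinder_bool,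
    sum_exp_votingEnergy_cylinder, sum_exp_votingEnergy_cylinder, two_mul]

lemma sum_gibbsPi_votingEnergy_cylinder (n : ℕ) (q : Bool) :
    ∑ x ∈ cylinder none q, gibbsPi (votingEnergy n w) x = 1 / 2 :=
  sum_gibbsPi_cylinder_eq_half _ (by simp only [sum_exp_votingEnergy_cylinder]) q

lemma card_cylinder_query (n : ℕ) (q : Bool) :
    #(cylinder (none : VotingVar n) q) = 4 ^ n := by
  rw [card_eq_sum_ones, sum_cylinder_none]
  simp [pow_mul]

lemma edgeMeasure_votingEnergy_le (n : ℕ) :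
    edgeMeasure (gibbsP (votingEnergy n w)) (gibbsPi (votingEnergy n w))
      (cylinder none true) (cylinder none false) ≤
      (4 * (2 * n + 1) * Real.cosh (w / 2) ^ (2 * n))⁻¹ := by
  have hflip (x : VotingVar n → Bool) (hx : x ∈ cylinder none true) :
      votingEnergy n w (update x none !true) = -votingEnergy n w x := by
    rw [← mem_cylinder.mp hx, votingEnergy_update_query]
  have hsum : ∑ x ∈ cylinder (none : VotingVar n) true,
      Real.exp ((votingEnergy n w x + votingEnergy n w (update x none !true)) / 2) = 4 ^ n := by
    rw [sum_congr rfl fun x hx => by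
      rw [hflip x hx, add_neg_cancel, zero_div, Real.exp_zero], sum_const, card_cylinder_query]
    simp
  refine (edgeMeasure_gibbs_cylinder_le (votingEnergy n w) none true).trans_eq ?_
  rw [hsum, sum_exp_votingEnergy, mul_pow, ← pow_mul]
  simp only [Fintype.card_option, Fintype.card_prod, Fintype.card_bool, Fintype.card_fin]
  push_cast
  field_simp
  ring

lemma MixedAt.mul_cosh_pow_le {t : ℕ}
    (hmix : MixedAt (gibbsP (votingEnergy n w)) (gibbsPi (votingEnergy n w)) t) :
    (n + 1 / 2) * Real.cosh (w / 2) ^ (2 * n) ≤ t := by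
  have hbottleneck := hmix.mul_le_edgeMeasure (gibbsP_mem_rowStochastic _) (gibbsPi_nonneg _)
    (gibbsPi_vecMul_gibbsP _) (cylinder none true)
  rw [compl_cylinder_bool, Bool.not_true, sum_gibbsPi_votingEnergy_cylinder,
    sum_gibbsPi_votingEnergy_cylinder] at hbottleneck
  have hflow : 1 / 8 ≤ t * (4 * (2 * n + 1) * Real.cosh (w / 2) ^ (2 * n))⁻¹ :=
    calc (1 / 8 : ℝ) = 1 / 2 * (1 / 2 - 1 / 4) := by norm_num
      _ ≤ _ := hbottleneck
      _ ≤ _ := mul_le_mul_of_nonneg_left (edgeMeasure_votingEnergy_le w n) t.cast_nonneg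
  rw [← div_eq_mul_inv, le_div_iff₀ (by positivity)] at hflow
  linarith

end Voting

theorem stmt14_general (w : ℝ) (hw : w ≠ 0) :
    ∃ c : ℝ, 0 < c ∧ ∃ N : ℕ, ∀ n : ℕ, N ≤ n →
      ∀ t : ℕ, MixedAt (gibbsP (votingEnergyLinear n w (fun _ => 0) (fun _ => 0)))
          (gibbsPi (votingEnergyLinear n w (fun _ => 0) (fun _ => 0))) t →
        (2 : ℝ) ^ (c * (n : ℝ)) ≤ (t : ℝ) := by
  have hcosh : 1 < Real.cosh (w / 2) := Real.one_lt_cosh.mpr (div_ne_zero hw two_ne_zero)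
  refine ⟨2 * Real.logb 2 (Real.cosh (w / 2)),
    mul_pos two_pos (Real.logb_pos one_lt_two hcosh), 1, fun n hn t hmix => ?_⟩
  calc (2 : ℝ) ^ (2 * Real.logb 2 (Real.cosh (w / 2)) * n)
      = Real.cosh (w / 2) ^ (2 * n) := by
        rw [mul_right_comm, mul_comm, Real.rpow_mul two_pos.le,
          Real.rpow_logb two_pos (by norm_num) (zero_lt_one.trans hcosh)]
        exact_mod_cast Real.rpow_natCast _ (2 * n)
    _ ≤ (n + 1 / 2) * Real.cosh (w / 2) ^ (2 * n) :=
        le_mul_of_one_le_left (by positivity) (by linarith [(Nat.one_le_cast (α := ℝ)).mpr hn])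
    _ ≤ t := hmix.mul_cosh_pow_le w

/-- **Lower bound for the voting model, linear semantics.**  For any sufficiently large
fixed vote weight `w > 0` and zero prior weights, there is a constant `c > 0` (depending
only on `w`) such that for all sufficiently large `n`, Gibbs sampling on the voting model
with linear semantics is not mixed before time `2^{c·n}`. -/
theorem stmt14 :
    ∃ w₀ : ℝ, 0 < w₀ ∧ ∀ w : ℝ, w₀ ≤ w →
      ∃ c : ℝ, 0 < c ∧ ∃ N : ℕ, ∀ n : ℕ, N ≤ n →
        ∀ t : ℕ, MixedAt (gibbsP (votingEnergyLinear n w (fun _ => 0) (fun _ => 0)))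
            (gibbsPi (votingEnergyLinear n w (fun _ => 0) (fun _ => 0))) t →
          (2 : ℝ) ^ (c * (n : ℝ)) ≤ (t : ℝ) := by
  exact ⟨1, one_pos, fun w hw => stmt14_general w (by linarith)⟩
end
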